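/- For every (m+1)-colored rooted tree τ, the ramification function 𝔯 defined by 𝔯(∅)=0, 𝔯(•_l)=1, 𝔯([τ₁]_l)=𝔯(τ₁), and 𝔯([τ₁,…,τ_κ]_l)=1+max_j 𝔯(τ_j) for κ≥2, satisfies: if 𝔯(τ)=k with k≥1, then ρ(τ) ≥ k − 1/2. -/

import Mathlib

inductive CTree (m : ℕ) : Type
  | node : Fin (m + 1) → List (CTree m) → CTree m

namespace CTree

variable {m : ℕ}

def rho : CTree m → ℚ
  | .node l ts => (if (l : ℕ) = 0 then 1 else 1/2) + (ts.attach.map (fun t => rho t.1)).sum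
decreasing_by
  all_goals try simp only [CTree.node.sizeOf_spec, List.cons.sizeOf_spec, List.nil.sizeOf_spec]
  all_goals try have := List.sizeOf_lt_of_mem t.2
  all_goals omega

def height : CTree m → ℕ
  | .node _ ts => 1 + (ts.attach.map (fun t => height t.1)).foldr max 0
decreasing_by
  all_goals try simp only [CTree.node.sizeOf_spec, List.cons.sizeOf_spec, List.nil.sizeOf_spec]
  all_goals try have := List.sizeOf_lt_of_mem t.2
  all_goals omega

def ram : CTree m → ℕ
  | .node _ [] => 1
  | .node _ [t] => ram t
  | .node _ ts => 1 + (ts.attach.map (fun t => ram t.1)).foldr max 0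
decreasing_by
  all_goals try simp only [CTree.node.sizeOf_spec, List.cons.sizeOf_spec, List.nil.sizeOf_spec]
  all_goals try have := List.sizeOf_lt_of_mem t.2
  all_goals omega

def dbl : CTree m → ℕ
  | .node _ [] => 1
  | .node _ ts =>
      let ds := ts.attach.map (fun t => dbl t.1)
      let M := ds.foldr max 0
      if 2 ≤ ds.count M then M + 1 else M
decreasing_by
  all_goals try simp only [CTree.node.sizeOf_spec, List.cons.sizeOf_spec, List.nil.sizeOf_spec]
  all_goals try have := List.sizeOf_lt_of_mem t.2
  all_goals omega


end CTree

/-!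
Every node weighs at least `1/2`, so it suffices that a tree with ramification `r` has at least
`2 * r - 1` nodes. Argue by induction: a root with one child leaves `r` unchanged, and if the root
has at least two children, then a child of ramification `r - 1` has at least `2 * r - 3` nodes,
while the root and a sibling of that child supply the two missing ones.
-/

theorem foldr_max_bot_mem {α : Type*} [LinearOrder α] [OrderBot α] {l : List α} (hl : l ≠ []) :
    l.foldr max ⊥ ∈ l :=
  List.maximum_mem (List.foldr_max_of_ne_nil hl).symm

theorem add_length_le_sum_add_one {l : List ℕ} (one_le : ∀ n ∈ l, 1 ≤ n) {a : ℕ} (ha : a ∈ l) :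
    a + l.length ≤ l.sum + 1 := by
  have length_rest_le : (l.erase a).length ≤ (l.erase a).sum :=
    List.length_le_sum_of_one_le _ fun n hn => one_le n (List.mem_of_mem_erase hn)
  calc a + l.length = a + (l.erase a).length + 1 := by
        rw [← List.length_erase_add_one ha, add_assoc]
    _ ≤ a + (l.erase a).sum + 1 := by gcongr
    _ = l.sum + 1 := by rw [List.sum_erase ha]

namespace CTree

variable {m : ℕ}

@[elab_as_elim, induction_eliminator]
theorem induction {motive : CTree m → Prop}
    (node : ∀ l ts, (∀ t ∈ ts, motive t) → motive (.node l ts)) : ∀ τ, motive τ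
  | .node l ts => node l ts fun t _ => induction node t

/-- The number of nodes of a colored tree, regardless of their colors. It mediates between the
order `rho` and the ramification function `ram`. -/
def numNodes : CTree m → ℕ
  | .node _ ts => 1 + (ts.map numNodes).sum

theorem numNodes_node (l : Fin (m + 1)) (ts : List (CTree m)) :
    numNodes (.node l ts) = 1 + (ts.map numNodes).sum := by
  rw [numNodes]

theorem numNodes_pos (τ : CTree m) : 0 < numNodes τ := by
  cases τ with
  | node l ts => rw [numNodes_node]; exact Nat.add_pos_left one_pos _

theorem rho_node (l : Fin (m + 1)) (ts : List (CTree m)) :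
    rho (.node l ts) = (if (l : ℕ) = 0 then 1 else 1 / 2) + (ts.map rho).sum := by
  rw [rho, List.attach_map_val]

theorem ram_node_nil (l : Fin (m + 1)) : ram (.node l []) = 1 := by
  rw [ram]

theorem ram_node_singleton (l : Fin (m + 1)) (t : CTree m) : ram (.node l [t]) = ram t := by
  rw [ram]

theorem ram_node_cons_cons (l : Fin (m + 1)) (t u : CTree m) (ts : List (CTree m)) :
    ram (.node l (t :: u :: ts)) = 1 + ((t :: u :: ts).map ram).foldr max 0 := by
  rw [ram, List.attach_map_val]
  all_goals simp

theorem exists_mem_ram_node_cons_cons (l : Fin (m + 1)) (t u : CTree m) (ts : List (CTree m)) :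
    ∃ s ∈ t :: u :: ts, ram (.node l (t :: u :: ts)) = 1 + ram s := by
  have max_mem : ((t :: u :: ts).map ram).foldr max 0 ∈ (t :: u :: ts).map ram :=
    foldr_max_bot_mem (List.cons_ne_nil _ _)
  obtain ⟨s, hs, ram_s⟩ := List.mem_map.mp max_mem
  exact ⟨s, hs, by rw [ram_node_cons_cons, ram_s]⟩

theorem numNodes_add_length_le_numNodes_node (l : Fin (m + 1)) {ts : List (CTree m)} {s : CTree m}
    (hs : s ∈ ts) : numNodes s + ts.length ≤ numNodes (.node l ts) := by
  have sum_bound := add_length_le_sum_add_one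
    (List.forall_mem_map.mpr fun t _ => numNodes_pos t) (List.mem_map_of_mem hs)
  rwa [List.length_map, add_comm _ 1, ← numNodes_node l] at sum_bound

theorem numNodes_le_two_mul_rho (τ : CTree m) : (numNodes τ : ℚ) ≤ 2 * rho τ := by
  induction τ with
  | node l ts ih =>
    have root_weight : (1 : ℚ) ≤ 2 * if (l : ℕ) = 0 then 1 else 1 / 2 := by
      split_ifs <;> norm_num
    calc (numNodes (.node l ts) : ℚ)
        = 1 + (ts.map fun t => (numNodes t : ℚ)).sum := by
          simp [numNodes_node, Function.comp_def]
      _ ≤ (2 * if (l : ℕ) = 0 then 1 else 1 / 2) + (ts.map fun t => 2 * rho t).sum :=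
          add_le_add root_weight (List.sum_le_sum ih)
      _ = 2 * rho (.node l ts) := by
          rw [rho_node, List.sum_map_mul_left, mul_add]

theorem two_mul_ram_le_numNodes_add_one (τ : CTree m) : 2 * ram τ ≤ numNodes τ + 1 := by
  induction τ with
  | node l ts ih =>
    match ts, ih with
    | [], _ => simp [ram_node_nil, numNodes_node]
    | [t], ih =>
      have child_bound : 2 * ram t ≤ numNodes t + 1 := ih t (List.mem_singleton_self t)
      have nodes_le : numNodes t + 1 ≤ numNodes (.node l [t]) :=
        numNodes_add_length_le_numNodes_node l (List.mem_singleton_self t)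
      rw [ram_node_singleton]
      omega
    | t :: u :: ts, ih =>
      obtain ⟨s, hs, ram_eq⟩ := exists_mem_ram_node_cons_cons l t u ts
      have child_bound : 2 * ram s ≤ numNodes s + 1 := ih s hs
      have nodes_le : numNodes s + (ts.length + 2) ≤ numNodes (.node l (t :: u :: ts)) :=
        numNodes_add_length_le_numNodes_node l hs
      omega

end CTree

open CTree in
theorem stmt1 (m : ℕ) (τ : CTree m) (k : ℕ) (hk : 1 ≤ k) (h : ram τ = k) :
    (k : ℚ) - 1/2 ≤ rho τ := by
  have nodes_bound : 2 * (ram τ : ℚ) ≤ numNodes τ + 1 :=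
    mod_cast two_mul_ram_le_numNodes_add_one τ
  have weight_bound : (numNodes τ : ℚ) ≤ 2 * rho τ := numNodes_le_two_mul_rho τ
  rw [← h]
  linarith
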